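/- arXiv:math/9811026 — 2 statements merged into one kernel-verified Lean document; each statement's English description precedes it below -/
import Mathlib

section
/- For every integer i ≥ 2 and every x in the neighborhood of 0, the series Σ_{k≥0} (-1)^{i+k} · y(x)^k / ((i+k-1)!·k!) converges and equals f_i(x); that is, f_i(x) = Σ_{k=0}^{∞} (-1)^{i+k} y(x)^k / ((i+k-1)!·k!). -/
/-- The sequence of functions `f_1 = 1 - 1/y'`, `f_{i+1} = f_i'/y'`. -/
noncomputable def fseq (y : ℝ → ℝ) : ℕ → ℝ → ℝ
  | 0 => fun _ => 0
  | 1 => fun x => 1 - 1 / deriv y x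
  | (n + 2) => fun x => deriv (fseq y (n + 1)) x / deriv y x

/-- Exponential-type power series. -/
noncomputable def egf (b : ℕ → ℝ) (z : ℝ) : ℝ := ∑' k : ℕ, b k * z ^ k / (Nat.factorial k : ℝ)

theorem egf_summable (b : ℕ → ℝ) (hb : ∀ k, |b k| ≤ 1) (z : ℝ) :
    Summable (fun k : ℕ => b k * z ^ k / (Nat.factorial k : ℝ)) := by
  refine Summable.of_norm_bounded (Real.summable_pow_div_factorial |z|) fun k => ?_
  rw [Real.norm_eq_abs, abs_div, abs_mul, abs_pow, Nat.abs_cast]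
  gcongr
  exact mul_le_of_le_one_left (by positivity) (hb k)

theorem egf_hasDerivAt (b : ℕ → ℝ) (hb : ∀ k, |b k| ≤ 1) (z : ℝ) :
    HasDerivAt (egf b) (egf (fun k => b (k + 1)) z) z := by
  have key : ∀ (k : ℕ) (w : ℝ), b (k + 1) * (((k + 1 : ℕ) : ℝ) * w ^ (k + 1 - 1)) /
      (Nat.factorial (k + 1) : ℝ) = b (k + 1) * w ^ k / (Nat.factorial k : ℝ) := by
    intro k w
    rw [Nat.factorial_succ]
    push_cast
    have : (Nat.factorial k : ℝ) ≠ 0 := by positivity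
    have : (k : ℝ) + 1 ≠ 0 := by positivity
    try simp only [Nat.add_sub_cancel]
    try simp only [add_tsub_cancel_right]
    field_simp
  have hR : (0 : ℝ) < |z| + 1 := by positivity
  have hs : Summable (fun k : ℕ => ((k : ℝ) * (|z| + 1) ^ (k - 1)) / (Nat.factorial k : ℝ)) := by
    rw [← summable_nat_add_iff 1]
    refine (Real.summable_pow_div_factorial (|z| + 1)).congr fun k => ?_
    rw [Nat.factorial_succ]
    push_cast
    have : (Nat.factorial k : ℝ) ≠ 0 := by positivity
    have : (k : ℝ) + 1 ≠ 0 := by positivity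
    try simp only [Nat.add_sub_cancel]
    try simp only [add_tsub_cancel_right]
    field_simp
  have h := hasDerivAt_tsum_of_isPreconnected (𝕜 := ℝ) (t := Metric.ball (0 : ℝ) (|z| + 1))
    (g := fun (k : ℕ) w => b k * w ^ k / (Nat.factorial k : ℝ))
    (g' := fun (k : ℕ) w => b k * ((k : ℝ) * w ^ (k - 1)) / (Nat.factorial k : ℝ))
    (y₀ := 0) (y := z) hs Metric.isOpen_ball (convex_ball _ _).isPreconnected
    (fun k w _ => ((hasDerivAt_pow k w).const_mul (b k)).div_const _)
    (fun k w hw => by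
      have hw' : |w| ≤ |z| + 1 := by
        have := hw
        rw [Metric.mem_ball, dist_zero_right, Real.norm_eq_abs] at this
        exact this.le
      rw [Real.norm_eq_abs, abs_div, abs_mul, abs_mul, abs_pow, Nat.abs_cast, Nat.abs_cast]
      refine div_le_div_of_nonneg_right ?_ (by positivity)
      refine (mul_le_of_le_one_left (by positivity) (hb k)).trans ?_
      gcongr)
    (by simpa using hR) (egf_summable b hb 0)
    (by simp)
  refine h.congr_deriv ?_
  have hs' : Summable (fun k : ℕ => b k * ((k : ℝ) * z ^ (k - 1)) / (Nat.factorial k : ℝ)) := by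
    rw [← summable_nat_add_iff 1]
    exact (egf_summable (fun k => b (k + 1)) (fun k => hb _) z).congr fun k => (key k z).symm
  rw [hs'.tsum_eq_zero_add]
  simp only [Nat.cast_zero, zero_mul, mul_zero, zero_div, zero_add]
  exact tsum_congr fun k => key k z

/-- Coefficients of `f_(m+1)`. -/
noncomputable def cf (m k : ℕ) : ℝ := (-1) ^ (m + 1 + k) / (Nat.factorial (m + k) : ℝ)

theorem cf_le (m k : ℕ) : |cf m k| ≤ 1 := by
  rw [cf, abs_div, abs_pow, abs_neg, abs_one, one_pow, Nat.abs_cast]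
  exact div_le_one_of_le₀ (by exact_mod_cast Nat.factorial_pos _) (by positivity)

theorem cf_shift (m : ℕ) : (fun k => cf m (k + 1)) = cf (m + 1) := by
  funext k
  simp only [cf]
  rw [show m + 1 + (k + 1) = m + 1 + 1 + k by ring, show m + (k + 1) = m + 1 + k by ring]

theorem cf_hasDerivAt (m : ℕ) (z : ℝ) : HasDerivAt (egf (cf m)) (egf (cf (m + 1)) z) z := by
  rw [← cf_shift]
  exact egf_hasDerivAt _ (cf_le m) z

/-- Coefficients of `u`. -/
noncomputable def cu : ℕ → ℝ
  | 0 => 0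
  | k + 1 => - cf 0 k

theorem cu_le (k : ℕ) : |cu k| ≤ 1 := by
  cases k with
  | zero => simp [cu]
  | succ k => simpa [cu] using cf_le 0 k

theorem cu_hasDerivAt (z : ℝ) : HasDerivAt (egf cu) (- egf (cf 0) z) z := by
  refine (egf_hasDerivAt _ cu_le z).congr_deriv ?_
  simp only [cu, egf, neg_mul, neg_div, tsum_neg]

theorem egf_cu (z : ℝ) : egf cu z = ∑' k : ℕ, (-1 : ℝ) ^ k * z ^ (k + 1) /
      ((Nat.factorial k : ℝ) * (Nat.factorial (k + 1) : ℝ)) := by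
  rw [egf, (egf_summable cu cu_le z).tsum_eq_zero_add]
  simp only [cu, zero_mul, zero_div, zero_add]
  refine tsum_congr fun k => ?_
  simp only [cf, zero_add]
  have : (Nat.factorial k : ℝ) ≠ 0 := by positivity
  have : (Nat.factorial (k + 1) : ℝ) ≠ 0 := by positivity
  field_simp
  ring

theorem stmt2
    (U : Set ℝ) (hU : IsOpen U) (h0U : (0 : ℝ) ∈ U)
    (y : ℝ → ℝ) (hy : AnalyticOnNhd ℝ y U)
    (hy0 : y 0 = 0) (hy'0 : deriv y 0 = 1)
    (hfun : ∀ x ∈ U, x = ∑' k : ℕ, (-1 : ℝ) ^ k * y x ^ (k + 1) /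
      ((Nat.factorial k : ℝ) * (Nat.factorial (k + 1) : ℝ)))
    (hy' : ∀ x ∈ U, deriv y x ≠ 0) :
    ∀ i : ℕ, 2 ≤ i → ∀ x ∈ U,
      HasSum (fun k : ℕ => (-1 : ℝ) ^ (i + k) * y x ^ k /
          ((Nat.factorial (i + k - 1) : ℝ) * (Nat.factorial k : ℝ)))
        (fseq y i x) := by
  have hd : ∀ x ∈ U, HasDerivAt y (deriv y x) x := fun x hx =>
    (hy x hx).differentiableAt.hasDerivAt
  have h1 : ∀ x ∈ U, fseq y 1 x = 1 + egf (cf 0) (y x) := by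
    intro x hx
    have e : (fun t => egf cu (y t)) =ᶠ[nhds x] fun t => t := by
      filter_upwards [hU.mem_nhds hx] with t ht
      rw [egf_cu]
      exact (hfun t ht).symm
    have a := (cu_hasDerivAt (y x)).comp x (hd x hx)
    have b := (hasDerivAt_id x).congr_of_eventuallyEq e
    have c := a.unique b
    simp only [fseq]
    have := hy' x hx
    field_simp
    linarith
  have h2 : ∀ n : ℕ, ∀ x ∈ U, fseq y (n + 2) x = egf (cf (n + 1)) (y x) := by
    have step : ∀ (n : ℕ) (c : ℝ), (∀ x ∈ U, fseq y (n + 1) x = c + egf (cf n) (y x)) →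
        ∀ x ∈ U, fseq y (n + 2) x = egf (cf (n + 1)) (y x) := by
      intro n c h x hx
      have e : fseq y (n + 1) =ᶠ[nhds x] fun t => c + egf (cf n) (y t) := by
        filter_upwards [hU.mem_nhds hx] with t ht using h t ht
      have a := ((cf_hasDerivAt n (y x)).comp x (hd x hx)).const_add c
      have b := (a.congr_of_eventuallyEq e).deriv
      simp only [fseq]
      rw [b, mul_div_cancel_right₀ _ (hy' x hx)]
    intro n
    induction n with
    | zero => exact step 0 1 h1
    | succ n ih => exact step (n + 1) 0 (by simpa using ih)
  intro i hi x hx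
  obtain ⟨n, rfl⟩ := Nat.exists_eq_add_of_le' hi
  rw [h2 n x hx]
  have e : (fun k : ℕ => (-1 : ℝ) ^ (n + 2 + k) * y x ^ k /
      ((Nat.factorial (n + 2 + k - 1) : ℝ) * (Nat.factorial k : ℝ))) =
      fun k => cf (n + 1) k * y x ^ k / (Nat.factorial k : ℝ) := by
    funext k
    rw [cf, show n + 2 + k - 1 = n + 1 + k by omega, show n + 1 + 1 + k = n + 2 + k by ring]
    rw [div_mul_eq_mul_div, div_div]
  rw [e]
  exact (egf_summable _ (cf_le (n + 1)) (y x)).hasSum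
end

section
/- The values of the functions f_i at x = 0 are: f_1(0) = 0, and f_i(0) = (-1)^i / (i-1)! for every integer i ≥ 2. -/
noncomputable def uc (n : ℕ) : ℝ := -(-1) ^ n * n / ((n.factorial : ℝ) * n.factorial)

noncomputable def uf (z : ℝ) : ℝ := ∑' n, uc n * z ^ n

lemma uc_bound (n : ℕ) (r : ℝ) (hr : 0 ≤ r) : ‖uc n‖ * r ^ n ≤ r ^ n / n.factorial := by
  have h1 : (n : ℝ) ≤ n.factorial := by exact_mod_cast Nat.self_le_factorial n
  have h2 : (0 : ℝ) < n.factorial := by exact_mod_cast Nat.factorial_pos n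
  have h3 : ‖uc n‖ ≤ 1 / n.factorial := by
    unfold uc
    rw [norm_div, norm_mul, norm_neg, norm_pow, norm_neg, norm_one, one_pow, one_mul, norm_mul,
      Real.norm_natCast, Real.norm_natCast, div_le_div_iff₀ (by positivity) h2]
    nlinarith
  calc _ ≤ 1 / n.factorial * r ^ n := by gcongr
    _ = _ := by ring

lemma uc_summable (z : ℝ) : Summable fun n => uc n * z ^ n := by
  refine Summable.of_norm_bounded (Real.summable_pow_div_factorial ‖z‖) fun n => ?_
  rw [norm_mul, norm_pow]
  exact uc_bound n _ (norm_nonneg z)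

lemma uf_series : HasFPowerSeriesOnBall uf (FormalMultilinearSeries.ofScalars ℝ uc) 0 ⊤ := by
  have hr : (FormalMultilinearSeries.ofScalars ℝ uc).radius = ⊤ := by
    apply FormalMultilinearSeries.radius_eq_top_of_summable_norm
    intro r
    refine Summable.of_nonneg_of_le (fun n => by positivity) (fun n => ?_)
      (Real.summable_pow_div_factorial r)
    rw [FormalMultilinearSeries.ofScalars_norm]
    exact uc_bound n r r.2
  refine ⟨hr.ge, by simp, fun {z} _ => ?_⟩
  rw [zero_add]
  have h : HasSum (fun n => uc n * z ^ n) (uf z) := (uc_summable z).hasSum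
  simpa [FormalMultilinearSeries.ofScalars_apply_eq, mul_comm] using h

lemma uf_analytic (z : ℝ) : AnalyticAt ℝ uf z :=
  uf_series.analyticAt_of_mem (by simp)

lemma uf_iter (n : ℕ) : iteratedDeriv n uf 0 = n.factorial * uc n := by
  have h := (uf_analytic 0).hasFPowerSeriesAt.eq_formalMultilinearSeries
    uf_series.hasFPowerSeriesAt
  have h2 := congrArg (fun p => FormalMultilinearSeries.coeff p n) h
  simp only [FormalMultilinearSeries.coeff_ofScalars] at h2
  rw [← h2]
  have : (n.factorial : ℝ) ≠ 0 := by exact_mod_cast Nat.factorial_ne_zero n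
  field_simp

lemma uf_eq (z : ℝ) : uf z = ∑' k : ℕ, (-1 : ℝ) ^ k * z ^ (k + 1) /
      ((Nat.factorial k : ℝ) * (Nat.factorial (k + 1) : ℝ)) := by
  unfold uf
  rw [(uc_summable z).tsum_eq_zero_add]
  have h0 : uc 0 = 0 := by simp [uc]
  rw [h0, zero_mul, zero_add]
  congr 1
  ext k
  have : (k.factorial : ℝ) ≠ 0 := by exact_mod_cast Nat.factorial_ne_zero k
  have : (k : ℝ) + 1 ≠ 0 := by positivity
  simp only [uc, Nat.factorial_succ]
  push_cast
  field_simp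
  ring

lemma uf_hasDeriv (n : ℕ) (z : ℝ) :
    HasDerivAt (iteratedDeriv n uf) (iteratedDeriv (n + 1) uf z) z := by
  rw [iteratedDeriv_succ]
  exact ((uf_analytic z).iterated_deriv n |> fun h => by
    rw [iteratedDeriv_eq_iterate]; exact h.differentiableAt.hasDerivAt)

theorem stmt4
    (U : Set ℝ) (hU : IsOpen U) (h0U : (0 : ℝ) ∈ U)
    (y : ℝ → ℝ) (hy : AnalyticOnNhd ℝ y U)
    (hy0 : y 0 = 0) (hy'0 : deriv y 0 = 1)
    (hfun : ∀ x ∈ U, x = ∑' k : ℕ, (-1 : ℝ) ^ k * y x ^ (k + 1) /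
      ((Nat.factorial k : ℝ) * (Nat.factorial (k + 1) : ℝ)))
    (hy' : ∀ x ∈ U, deriv y x ≠ 0) :
    fseq y 1 0 = 0 ∧
      ∀ i : ℕ, 2 ≤ i → fseq y i 0 = (-1 : ℝ) ^ i / (Nat.factorial (i - 1) : ℝ) := by
  have hyd : ∀ x ∈ U, HasDerivAt y (deriv y x) x := fun x hx =>
    (hy x hx).differentiableAt.hasDerivAt
  have hcomp : ∀ n, ∀ x ∈ U, HasDerivAt (fun t => iteratedDeriv n uf (y t))
      (iteratedDeriv (n + 1) uf (y x) * deriv y x) x := fun n x hx =>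
    (uf_hasDeriv n (y x)).comp x (hyd x hx)
  have h1 : ∀ x ∈ U, fseq y 1 x = 1 - iteratedDeriv 1 uf (y x) := by
    intro x hx
    have ha := hcomp 0 x hx
    have hb : HasDerivAt (fun t => iteratedDeriv 0 uf (y t)) 1 x := by
      refine (hasDerivAt_id x).congr_of_eventuallyEq ?_
      filter_upwards [hU.mem_nhds hx] with t ht
      rw [iteratedDeriv_zero, uf_eq]
      exact (hfun t ht).symm
    have hc := ha.unique hb
    have hd := hy' x hx
    simp only [fseq]
    rw [← hc]
    field_simp
  have h2 : ∀ n, ∀ x ∈ U, fseq y (n + 2) x = - iteratedDeriv (n + 2) uf (y x) := by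
    intro n
    induction n with
    | zero =>
      intro x hx
      have hd := hy' x hx
      have ha : HasDerivAt (fseq y 1) (-(iteratedDeriv 2 uf (y x) * deriv y x)) x := by
        refine ((hcomp 1 x hx).const_sub 1).congr_of_eventuallyEq ?_
        filter_upwards [hU.mem_nhds hx] with t ht using h1 t ht
      change deriv (fseq y 1) x / deriv y x = _
      rw [ha.deriv]
      field_simp
    | succ n ih =>
      intro x hx
      have hd := hy' x hx
      have ha : HasDerivAt (fseq y (n + 2)) (-(iteratedDeriv (n + 3) uf (y x) * deriv y x)) x := by
        refine ((hcomp (n + 2) x hx).neg).congr_of_eventuallyEq ?_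
        filter_upwards [hU.mem_nhds hx] with t ht using ih t ht
      change deriv (fseq y (n + 2)) x / deriv y x = _
      rw [ha.deriv]
      field_simp
  refine ⟨by simp [fseq, hy'0], fun i hi => ?_⟩
  obtain ⟨n, rfl⟩ := Nat.exists_eq_add_of_le' hi
  rw [h2 n 0 h0U, hy0, uf_iter]
  have : ((n + 1).factorial : ℝ) ≠ 0 := by exact_mod_cast Nat.factorial_ne_zero _
  have : (n : ℝ) + 1 + 1 ≠ 0 := by positivity
  have e : n + 2 - 1 = n + 1 := rfl
  rw [e]
  simp only [uc, Nat.factorial_succ (n + 1)]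
  push_cast
  field_simp
  ring
end
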